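/- arXiv:2511.23297 — 4 statements merged into one kernel-verified Lean document; each statement's English description precedes it below -/
import Mathlib

section
/- Let G be a finite tree whose diameter equals 2r' for some r' ∈ ℕ (even diameter). Then the last layer index r of the leaf-peeling process equals r', the layer V_r is a singleton {l}, the eccentricity of l in G equals r, and every vertex v ≠ l has eccentricity at least r + 1 in G. -/
variable {V : Type*} [Fintype V] [DecidableEq V]

def remaining (G : SimpleGraph V) [DecidableRel G.Adj] : ℕ → Finset V
  | 0 => Finset.univ
  | i + 1 => (remaining G i).filter fun v =>
      1 < ((remaining G i).filter fun u => G.Adj v u).card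

def layer (G : SimpleGraph V) [DecidableRel G.Adj] (i : ℕ) : Finset V :=
  (remaining G i).filter fun v =>
    ((remaining G i).filter fun u => G.Adj v u).card ≤ 1

/-- `r` is the largest index with `V_r` nonempty. -/
def IsLastIndex (G : SimpleGraph V) [DecidableRel G.Adj] (r : ℕ) : Prop :=
  (layer G r).Nonempty ∧ ∀ i, r < i → layer G i = ∅

/-- Eccentricity of a vertex: the maximum graph distance to another vertex. -/
noncomputable def ecc (G : SimpleGraph V) (v : V) : ℕ :=
  Finset.univ.sup fun u => G.dist v u

/-- Diameter: the maximum eccentricity. -/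
noncomputable def diam (G : SimpleGraph V) : ℕ :=
  Finset.univ.sup fun v => ecc G v

/-!
Let `l` be the midpoint of a longest path, with ends `a` and `b` at distance `2r'`. In a tree the
geodesics from any vertex `w` to `a` and to `b` cannot both avoid `l`, so `w` has a vertex at
distance `dist w l + r'`. As no distance exceeds `2r'`, this forces `dist w l ≤ r'`; hence `l` has
eccentricity `r'` and every other vertex has a larger one.

A vertex of a geodesic at distance at least `i` from both ends survives `i` rounds of peeling,
because its two neighbours on the geodesic survive `i - 1` rounds; so `l` survives `r'` rounds.
Conversely, a vertex `v ≠ l` that survives a round has two surviving neighbours, of which at most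
one is closer to `l`. Following the other one outwards for `i` rounds gives
`i + dist l v ≤ ecc l = r'`, so that after `r'` rounds only `l` is left.
-/

section Betweenness

variable {α : Type*} {G : SimpleGraph α} {a b m v x y : α}

/-- Metric betweenness: `m` lies on a geodesic from `a` to `b`, expressed through distances so that
no path has to be chosen. In a disconnected graph, where `dist` is `0` across components, it has
this meaning only for vertices of one component. -/
abbrev IsBetween (G : SimpleGraph α) (a m b : α) : Prop :=
  G.dist a m + G.dist m b = G.dist a b

theorem IsBetween.symm (h : IsBetween G a m b) : IsBetween G b m a := by
  rw [IsBetween, G.dist_comm (u := b) (v := m), G.dist_comm (u := m) (v := a),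
    G.dist_comm (u := b) (v := a), add_comm]
  exact h

theorem IsBetween.trans (hG : G.Connected) (hx : IsBetween G a x v) (hv : IsBetween G a v b) :
    IsBetween G a x b := by
  have h₁ := hG.dist_triangle (u := a) (v := x) (w := b)
  have h₂ := hG.dist_triangle (u := x) (v := v) (w := b)
  omega

theorem isBetween_of_mem_support {p : G.Walk a b} (hp : p.length = G.dist a b)
    (hm : m ∈ p.support) : IsBetween G a m b := by
  classical
  rw [IsBetween, ← G.length_eq_dist_of_subwalk hp (p.isSubwalk_takeUntil hm),
    ← G.length_eq_dist_of_subwalk hp (p.isSubwalk_dropUntil hm), ← SimpleGraph.Walk.length_append,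
    p.take_spec hm, hp]

theorem exists_isBetween_dist_eq (h : G.Reachable a b) {n : ℕ} (hn : n ≤ G.dist a b) :
    ∃ m, IsBetween G a m b ∧ G.dist a m = n := by
  obtain ⟨p, hp⟩ := h.exists_walk_length_eq_dist
  refine ⟨p.getVert n, isBetween_of_mem_support hp (p.getVert_mem_support n), ?_⟩
  rw [← G.length_eq_dist_of_subwalk hp (p.isSubwalk_take n), p.take_length, hp, min_eq_left hn]

theorem exists_adj_isBetween (h : G.Reachable a v) (hne : a ≠ v) :
    ∃ u, G.Adj v u ∧ IsBetween G a u v := by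
  obtain ⟨u, hu, hdist⟩ := exists_isBetween_dist_eq h.symm (h.symm.pos_dist_of_ne hne.symm)
  exact ⟨u, SimpleGraph.dist_eq_one_iff_adj.mp hdist, hu.symm⟩

theorem mem_support_of_isBetween (hG : G.IsTree) (h : IsBetween G a m b) (p : G.Walk a b) :
    m ∈ p.support := by
  classical
  obtain ⟨s, hs⟩ := hG.connected.exists_walk_length_eq_dist a m
  obtain ⟨t, ht⟩ := hG.connected.exists_walk_length_eq_dist m b
  have hst : (s.append t).IsPath := SimpleGraph.Walk.isPath_of_length_eq_dist _ <| by
    rw [SimpleGraph.Walk.length_append, hs, ht, h]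
  have hbypass : s.append t = p.bypass :=
    (hG.existsUnique_path a b).unique hst p.bypass_isPath
  apply p.support_bypass_subset_support
  rw [← hbypass, SimpleGraph.Walk.mem_support_append_iff]
  exact .inl s.end_mem_support

theorem IsBetween.left_or_right (hG : G.IsTree) (h : IsBetween G a m b) (w : α) :
    IsBetween G w m a ∨ IsBetween G w m b := by
  obtain ⟨p, hp⟩ := hG.connected.exists_walk_length_eq_dist w a
  obtain ⟨q, hq⟩ := hG.connected.exists_walk_length_eq_dist w b
  have hm : m ∈ (p.reverse.append q).support := mem_support_of_isBetween hG h _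
  rw [SimpleGraph.Walk.mem_support_append_iff, SimpleGraph.Walk.support_reverse,
    List.mem_reverse] at hm
  exact hm.imp (isBetween_of_mem_support hp) (isBetween_of_mem_support hq)

theorem IsBetween.eq_of_dist_eq (hG : G.IsTree) (hx : IsBetween G a x b) (hy : IsBetween G a y b)
    (h : G.dist a x = G.dist a y) : x = y := by
  have hyx : G.dist y x = 0 := by
    have hxa : G.dist x a = G.dist y a := by rwa [G.dist_comm, G.dist_comm (u := y)]
    rcases hx.left_or_right hG y with hya | hyb <;> omega
  exact (hG.connected.dist_eq_zero_iff.mp hyx).symm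

theorem dist_eq_succ_or_of_adj_of_adj (hG : G.IsTree) (l : α) (hx : G.Adj v x) (hy : G.Adj v y)
    (hxy : x ≠ y) : G.dist l x = G.dist l v + 1 ∨ G.dist l y = G.dist l v + 1 := by
  have isBetween_of_closer {u : α} (hu : G.Adj v u) (h : G.dist l v = G.dist l u + 1) :
      IsBetween G l u v := by
    rw [IsBetween, SimpleGraph.dist_eq_one_iff_adj.mpr hu.symm, h]
  rcases hG.dist_eq_dist_add_one_of_adj l hx with hlx | hlx
  · rcases hG.dist_eq_dist_add_one_of_adj l hy with hly | hly
    · exact absurd ((isBetween_of_closer hx hlx).eq_of_dist_eq hG (isBetween_of_closer hy hly)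
        (by omega)) hxy
    · exact .inr hly
  · exact .inl hlx

end Betweenness

section Eccentricity

variable {α : Type*} [Fintype α] {G : SimpleGraph α}

theorem dist_le_ecc (v u : α) : G.dist v u ≤ ecc G v :=
  Finset.le_sup (f := fun u => G.dist v u) (Finset.mem_univ u)

theorem ecc_le_diam (v : α) : ecc G v ≤ diam G :=
  Finset.le_sup (f := fun v => ecc G v) (Finset.mem_univ v)

theorem exists_dist_eq_diam [Nonempty α] : ∃ a b, G.dist a b = diam G := by
  obtain ⟨a, -, ha⟩ :=
    Finset.exists_mem_eq_sup Finset.univ Finset.univ_nonempty fun v => ecc G v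
  obtain ⟨b, -, hb⟩ :=
    Finset.exists_mem_eq_sup Finset.univ Finset.univ_nonempty fun u => G.dist a u
  exact ⟨a, b, (ha.trans hb).symm⟩

theorem IsBetween.add_dist_le_ecc (hG : G.IsTree) {a b m : α} {n : ℕ} (h : IsBetween G a m b)
    (ha : n ≤ G.dist a m) (hb : n ≤ G.dist m b) (w : α) : n + G.dist w m ≤ ecc G w := by
  rw [G.dist_comm] at ha
  rcases h.left_or_right hG w with hwa | hwb
  · have := dist_le_ecc (G := G) w a
    omega
  · have := dist_le_ecc (G := G) w b
    omega

theorem ecc_eq_of_forall_add_dist_le {l : α} {n : ℕ} (hdiam : diam G = 2 * n)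
    (h : ∀ w, n + G.dist w l ≤ ecc G w) : ecc G l = n := by
  refine le_antisymm (Finset.sup_le fun w _ => ?_) (by simpa using h l)
  have := (h w).trans (ecc_le_diam w)
  rw [G.dist_comm]
  omega

end Eccentricity

section Peeling

variable {α : Type*} [Fintype α] {G : SimpleGraph α} [DecidableRel G.Adj] {i : ℕ}

theorem mem_remaining_succ {v : α} : v ∈ remaining G (i + 1) ↔
    v ∈ remaining G i ∧
      ∃ x ∈ remaining G i, G.Adj v x ∧ ∃ y ∈ remaining G i, G.Adj v y ∧ x ≠ y := by
  simp only [remaining, Finset.mem_filter, Finset.one_lt_card, and_assoc]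

theorem remaining_antitone : Antitone (remaining G) :=
  antitone_nat_of_succ_le fun _ => Finset.filter_subset _ _

theorem layer_eq_remaining_of_card_le_one (h : (remaining G i).card ≤ 1) :
    layer G i = remaining G i :=
  Finset.filter_true_of_mem fun _ _ => (Finset.card_filter_le _ _).trans h

theorem remaining_succ_eq_empty_of_card_le_one (h : (remaining G i).card ≤ 1) :
    remaining G (i + 1) = ∅ :=
  Finset.filter_false_of_mem fun _ _ => not_lt.mpr ((Finset.card_filter_le _ _).trans h)

theorem IsLastIndex.eq_of_card_remaining_eq_one {r : ℕ} (hr : IsLastIndex G r)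
    (h : (remaining G i).card = 1) : r = i := by
  apply le_antisymm <;> by_contra! hlt
  · have hempty : remaining G r ⊆ ∅ :=
      remaining_succ_eq_empty_of_card_le_one h.le ▸ remaining_antitone hlt
    exact absurd (hr.1.mono ((Finset.filter_subset _ _).trans hempty)) Finset.not_nonempty_empty
  · have hempty : remaining G i = ∅ :=
      (layer_eq_remaining_of_card_le_one h.le).symm.trans (hr.2 i hlt)
    simp [hempty] at h

theorem mem_remaining_of_isBetween (hG : G.Connected) {a b v : α} (hv : IsBetween G a v b)
    (ha : i ≤ G.dist a v) (hb : i ≤ G.dist v b) : v ∈ remaining G i := by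
  induction i generalizing v with
  | zero => exact Finset.mem_univ v
  | succ i ih =>
    obtain ⟨x, hvx, hx⟩ := exists_adj_isBetween (hG a v) (by rintro rfl; simp at ha)
    obtain ⟨y, hvy, hy⟩ := exists_adj_isBetween (hG b v) (by rintro rfl; simp at hb)
    have hdx : G.dist x v = 1 := SimpleGraph.dist_eq_one_iff_adj.mpr hvx.symm
    have hdy : G.dist v y = 1 := SimpleGraph.dist_eq_one_iff_adj.mpr hvy
    have hvyb : IsBetween G v y b := hy.symm
    have hxb : IsBetween G a x b := hx.trans hG hv
    have hyb : IsBetween G a y b := (hy.trans hG hv.symm).symm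
    have hxmem : x ∈ remaining G i := ih hxb (by omega) (by omega)
    have hymem : y ∈ remaining G i := ih hyb (by omega) (by omega)
    have hxy : x ≠ y := by
      rintro rfl
      omega
    exact mem_remaining_succ.mpr
      ⟨ih hv (by omega) (by omega), x, hxmem, hvx, y, hymem, hvy, hxy⟩

theorem add_dist_le_ecc_of_mem_remaining (hG : G.IsTree) {l v : α} (hne : v ≠ l)
    (hv : v ∈ remaining G i) : i + G.dist l v ≤ ecc G l := by
  induction i generalizing v with
  | zero => simpa using dist_le_ecc l v
  | succ i ih =>
    obtain ⟨-, x, hx, hvx, y, hy, hvy, hxy⟩ := mem_remaining_succ.mp hv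
    have le_of_farther {u : α} (hu : u ∈ remaining G i) (hdist : G.dist l u = G.dist l v + 1) :
        i + 1 + G.dist l v ≤ ecc G l := by
      have := ih (by rintro rfl; simp at hdist) hu
      omega
    exact (dist_eq_succ_or_of_adj_of_adj hG l hvx hvy hxy).elim
      (le_of_farther hx) (le_of_farther hy)

theorem remaining_ecc_eq_singleton (hG : G.IsTree) {l : α} (hl : l ∈ remaining G (ecc G l)) :
    remaining G (ecc G l) = {l} := by
  refine Finset.eq_singleton_iff_unique_mem.mpr ⟨hl, fun v hv => ?_⟩
  by_contra hne
  have hle := add_dist_le_ecc_of_mem_remaining hG hne hv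
  have hpos := hG.connected.pos_dist_of_ne (Ne.symm hne)
  omega

end Peeling

/-- If a finite tree has even diameter `2r'`, then the last
layer index `r` of the leaf-peeling process equals `r'`, the last layer is a
singleton `{l}`, the eccentricity of `l` is `r`, and every other vertex has
eccentricity at least `r + 1`. -/
theorem even_diameter_center (G : SimpleGraph V) [DecidableRel G.Adj]
    [Nonempty V] (hG : G.IsTree) (r' : ℕ) (hdiam : diam G = 2 * r')
    (r : ℕ) (hr : IsLastIndex G r) :
    r = r' ∧ ∃ l : V, layer G r = {l} ∧ ecc G l = r ∧
      ∀ v : V, v ≠ l → r + 1 ≤ ecc G v := by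
  obtain ⟨a, b, hab⟩ := exists_dist_eq_diam (G := G)
  obtain ⟨l, hl, hal⟩ := exists_isBetween_dist_eq (n := r') (hG.connected a b) (by omega)
  have hlb : G.dist l b = r' := by omega
  have hfar : ∀ w, r' + G.dist w l ≤ ecc G w := hl.add_dist_le_ecc hG hal.ge hlb.ge
  have hecc : ecc G l = r' := ecc_eq_of_forall_add_dist_le hdiam hfar
  have hmem : l ∈ remaining G r' :=
    mem_remaining_of_isBetween hG.connected hl hal.ge hlb.ge
  have hrem : remaining G r' = {l} := by
    rw [← hecc] at hmem ⊢
    exact remaining_ecc_eq_singleton hG hmem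
  have hcard : (remaining G r').card = 1 := by rw [hrem, Finset.card_singleton]
  obtain rfl : r = r' := hr.eq_of_card_remaining_eq_one hcard
  refine ⟨rfl, l, (layer_eq_remaining_of_card_le_one hcard.le).trans hrem, hecc, fun v hv => ?_⟩
  exact (Nat.add_le_add_left (hG.connected.pos_dist_of_ne hv) r).trans (hfar v)
end

section
/- Let G be a finite tree with layers V_0, …, V_r. For every i ∈ {0, …, r} and every vertex v ∈ V_i, the subtree T^v rooted at v has height exactly i; that is, the maximum distance in T^v from v to a vertex of T^v equals i. -/
/-!
On a union of layers the layer index is a rank for which every vertex has at most one neighbour of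
the same or a larger rank. Such a graph is a forest, since a vertex of minimal rank on a cycle would
have two such neighbours. Moreover, a path which starts by descending can never turn upwards again:
the only neighbour that does not lie below is the vertex it has just come from. So no path in `T^v`
starting at `v ∈ V_i` is longer than `i`. Conversely, a vertex of `V_{k+1}` has at least two
neighbours in `G_k` but at most one in `G_{k+1}`, hence a neighbour in `V_k`; descending one layer
at a time gives a path of length `i`, which realises the distance because `T^v` is a tree.
-/

variable {V : Type*} [Fintype V] [DecidableEq V]

/-- The vertex set `{v} ∪ V_0 ∪ … ∪ V_{i-1}`; for `v ∈ V_i`, the subtree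
`T^v` rooted at `v` is the connected component of `v` in the subgraph of `G`
induced on this set. -/
def subSet (G : SimpleGraph V) [DecidableRel G.Adj] (i : ℕ) (v : V) : Set V :=
  insert v {u | ∃ j, j < i ∧ u ∈ layer G j}

section PeelingRank

open SimpleGraph

variable {W α : Type*} {H : SimpleGraph W}

/-- A rank on the vertices of a graph that could arise from peeling: when a vertex is removed, at
most one of its neighbours is still present or removed simultaneously. -/
def IsPeelingRank [LE α] (H : SimpleGraph W) (f : W → α) : Prop :=
  ∀ x, {y | H.Adj x y ∧ f x ≤ f y}.Subsingleton

theorem IsPeelingRank.isAcyclic [LinearOrder α] {f : W → α} (hf : IsPeelingRank H f) :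
    H.IsAcyclic := by
  classical
  intro u c hc
  obtain ⟨x, hx, hmin⟩ :=
    c.support.toFinset.exists_min_image f ⟨u, List.mem_toFinset.2 c.start_mem_support⟩
  rw [List.mem_toFinset] at hx
  let d := c.rotate x hx
  have hd : d.IsCycle := hc.rotate hx
  have hle : ∀ y ∈ d.support, f x ≤ f y := fun y hy =>
    hmin y (List.mem_toFinset.2 ((c.mem_support_rotate_iff x hx).1 hy))
  exact hd.snd_ne_penultimate <| hf x
    ⟨d.adj_snd hd.not_nil, hle _ (d.getVert_mem_support _)⟩
    ⟨(d.adj_penultimate hd.not_nil).symm, hle _ (d.getVert_mem_support _)⟩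

theorem IsPeelingRank.length_add_le {f : W → ℕ} (hf : IsPeelingRank H f) {x y : W}
    {p : H.Walk x y} (hp : p.IsPath) (hx : ∀ z ∈ p.support, H.Adj x z → f z < f x) :
    p.length + f y ≤ f x := by
  induction p with
  | nil => simp
  | @cons x w y hxw q ih =>
    rw [Walk.cons_isPath_iff] at hp
    have hlt : f w < f x := hx w (by simp) hxw
    have hw : ∀ z ∈ q.support, H.Adj w z → f z < f w := by
      intro z hz hwz
      by_contra! hle
      have hzx : z = x := hf w ⟨hwz, hle⟩ ⟨hxw.symm, hlt.le⟩
      exact hp.2 (hzx ▸ hz)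
    have := ih hp.1 hw
    rw [Walk.length_cons]
    omega

theorem IsPeelingRank.dist_le {f : W → ℕ} (hf : IsPeelingRank H f) {x y : W}
    (hx : ∀ z, H.Adj x z → f z < f x) (hxy : H.Reachable x y) : H.dist x y ≤ f x := by
  obtain ⟨p, hp, hlen⟩ := hxy.exists_path_of_dist
  have := hf.length_add_le hp fun z _ => hx z
  omega

theorem exists_isPath_length_eq_rank {f : W → ℕ}
    (hf : ∀ x, f x ≠ 0 → ∃ y, H.Adj x y ∧ f y + 1 = f x) (x : W) :
    ∃ (y : W) (p : H.Walk x y), p.IsPath ∧ p.length = f x ∧ ∀ z ∈ p.support, f z ≤ f x := by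
  induction hn : f x generalizing x with
  | zero => exact ⟨x, .nil, .nil, rfl, by simp [hn]⟩
  | succ n ih =>
    obtain ⟨w, hxw, hw⟩ := hf x (by omega)
    obtain ⟨y, q, hq, hlen, hle⟩ := ih w (by omega)
    have hx : x ∉ q.support := fun h => by
      have := hle x h
      omega
    refine ⟨y, .cons hxw q, hq.cons hx, by rw [Walk.length_cons, hlen], fun z hz => ?_⟩
    rcases List.mem_cons.1 hz with rfl | hz
    · exact hn.le
    · exact (hle z hz).trans n.le_succ

theorem dist_eq_length_of_isAcyclic (hH : H.IsAcyclic) {x y : W} {p : H.Walk x y}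
    (hp : p.IsPath) : H.dist x y = p.length := by
  obtain ⟨q, hq, hlen⟩ := p.reachable.exists_path_of_dist
  have hqp : q = p :=
    congrArg Subtype.val ((hH.subsingleton_path x y).elim ⟨q, hq⟩ ⟨p, hp⟩)
  rw [← hlen, hqp]

theorem IsPeelingRank.exists_dist_eq {f : W → ℕ} (hf : IsPeelingRank H f)
    (hdesc : ∀ x, f x ≠ 0 → ∃ y, H.Adj x y ∧ f y + 1 = f x) (x : W) :
    ∃ y, H.Reachable x y ∧ H.dist x y = f x := by
  obtain ⟨y, p, hp, hlen, -⟩ := exists_isPath_length_eq_rank hdesc x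
  exact ⟨y, p.reachable, (dist_eq_length_of_isAcyclic hf.isAcyclic hp).trans hlen⟩

end PeelingRank

section Layers

omit [DecidableEq V]

variable {G : SimpleGraph V} [DecidableRel G.Adj] {i j : ℕ} {v x : V}

theorem remaining_antitone_s7 (G : SimpleGraph V) [DecidableRel G.Adj] : Antitone (remaining G) :=
  antitone_nat_of_succ_le fun _ => Finset.filter_subset _ _

theorem mem_layer_iff : v ∈ layer G i ↔ v ∈ remaining G i ∧ v ∉ remaining G (i + 1) := by
  simp only [layer, remaining, Finset.mem_filter, not_and, not_lt]
  tauto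

theorem mem_remaining_iff_le (hv : v ∈ layer G i) : v ∈ remaining G j ↔ j ≤ i := by
  obtain ⟨hmem, hnot⟩ := mem_layer_iff.1 hv
  refine ⟨fun hj => ?_, fun hji => remaining_antitone_s7 G hji hmem⟩
  by_contra! hij
  exact hnot (remaining_antitone_s7 G hij hj)

theorem eq_of_mem_layer (hi : v ∈ layer G i) (hj : v ∈ layer G j) : i = j :=
  le_antisymm ((mem_remaining_iff_le hj).1 (mem_layer_iff.1 hi).1)
    ((mem_remaining_iff_le hi).1 (mem_layer_iff.1 hj).1)

theorem subsingleton_adj_remaining (hv : v ∈ layer G i) :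
    {w | G.Adj v w ∧ w ∈ remaining G i}.Subsingleton := by
  intro a ha b hb
  exact Finset.card_le_one.1 (Finset.mem_filter.1 hv).2 a (Finset.mem_filter.2 ha.symm)
    b (Finset.mem_filter.2 hb.symm)

theorem exists_adj_mem_layer (hv : v ∈ layer G (i + 1)) : ∃ w ∈ layer G i, G.Adj v w := by
  obtain ⟨hmem, hle⟩ := Finset.mem_filter.1 hv
  have hlt := (Finset.mem_filter.1 hmem).2
  obtain ⟨w, hw, hw'⟩ := Finset.exists_mem_notMem_of_card_lt_card (hle.trans_lt hlt)
  obtain ⟨hwi, hvw⟩ := Finset.mem_filter.1 hw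
  exact ⟨w, mem_layer_iff.2 ⟨hwi, fun h => hw' (Finset.mem_filter.2 ⟨h, hvw⟩)⟩, hvw⟩

/-- The index of the layer containing `v`, with junk value `0` if `v` is never peeled off (which
happens only if `G` has a cycle). -/
noncomputable def layerIndex (G : SimpleGraph V) [DecidableRel G.Adj] (v : V) : ℕ :=
  sInf {i | v ∈ layer G i}

theorem layerIndex_eq (hv : v ∈ layer G i) : layerIndex G v = i :=
  eq_of_mem_layer (Nat.sInf_mem (s := {i | v ∈ layer G i}) ⟨i, hv⟩) hv

theorem isPeelingRank_layerIndex {s : Set V} (hs : ∀ x ∈ s, ∃ i, x ∈ layer G i) :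
    IsPeelingRank (G.induce s) fun x => layerIndex G x := by
  intro x y hy z hz
  obtain ⟨i, hi⟩ := hs x x.2
  have mem_remaining (w : s) (hw : layerIndex G x ≤ layerIndex G w) : ↑w ∈ remaining G i := by
    obtain ⟨j, hj⟩ := hs w w.2
    rwa [mem_remaining_iff_le hj, ← layerIndex_eq hi, ← layerIndex_eq hj]
  exact Subtype.ext <| subsingleton_adj_remaining hi ⟨hy.1, mem_remaining y hy.2⟩
    ⟨hz.1, mem_remaining z hz.2⟩

theorem exists_mem_layer_of_mem_subSet (hv : v ∈ layer G i) (hx : x ∈ subSet G i v) :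
    ∃ j ≤ i, x ∈ layer G j := by
  rcases hx with rfl | ⟨j, hj, hxj⟩
  · exact ⟨i, le_rfl, hv⟩
  · exact ⟨j, hj.le, hxj⟩

theorem layerIndex_lt_of_mem_subSet (hx : x ∈ subSet G i v) (hne : x ≠ v) :
    layerIndex G x < i := by
  obtain ⟨j, hj, hxj⟩ := hx.resolve_left hne
  rwa [layerIndex_eq hxj]

theorem exists_adj_layerIndex_add_one_eq (hv : v ∈ layer G i) (x : subSet G i v)
    (hx : layerIndex G x ≠ 0) :
    ∃ y : subSet G i v,
      (G.induce (subSet G i v)).Adj x y ∧ layerIndex G y + 1 = layerIndex G x := by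
  obtain ⟨j, hji, hxj⟩ := exists_mem_layer_of_mem_subSet hv x.2
  rw [layerIndex_eq hxj] at hx ⊢
  obtain ⟨k, rfl⟩ := Nat.exists_eq_succ_of_ne_zero hx
  obtain ⟨y, hyk, hxy⟩ := exists_adj_mem_layer hxj
  exact ⟨⟨y, Or.inr ⟨k, hji, hyk⟩⟩, hxy, congrArg (· + 1) (layerIndex_eq hyk)⟩

theorem subtree_height_general (G : SimpleGraph V) [DecidableRel G.Adj] (i : ℕ) (v : V)
    (hv : v ∈ layer G i) :
    (∀ u : subSet G i v,
      (G.induce (subSet G i v)).Reachable ⟨v, Set.mem_insert v _⟩ u →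
        (G.induce (subSet G i v)).dist ⟨v, Set.mem_insert v _⟩ u ≤ i) ∧
    (∃ u : subSet G i v,
      (G.induce (subSet G i v)).Reachable ⟨v, Set.mem_insert v _⟩ u ∧
        (G.induce (subSet G i v)).dist ⟨v, Set.mem_insert v _⟩ u = i) := by
  have hrank : IsPeelingRank (G.induce (subSet G i v)) fun x => layerIndex G x :=
    isPeelingRank_layerIndex fun x hx =>
      (exists_mem_layer_of_mem_subSet hv hx).imp fun _ => And.right
  have hroot : layerIndex G v = i := layerIndex_eq hv
  constructor
  · intro u hu
    refine (hrank.dist_le (fun z hvz => ?_) hu).trans_eq hroot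
    exact (layerIndex_lt_of_mem_subSet z.2 (G.ne_of_adj hvz).symm).trans_eq hroot.symm
  · obtain ⟨u, hu, hdist⟩ := hrank.exists_dist_eq (exists_adj_layerIndex_add_one_eq hv)
      ⟨v, Set.mem_insert v _⟩
    exact ⟨u, hu, hdist.trans hroot⟩

end Layers

/-- For `v ∈ V_i`, the subtree `T^v` rooted at `v` has
height exactly `i`: the maximum distance (within the connected component of
`v` in the induced subgraph on `{v} ∪ V_0 ∪ … ∪ V_{i-1}`) from `v` equals
`i`. -/
theorem subtree_height (G : SimpleGraph V) [DecidableRel G.Adj]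
    [Nonempty V] (hG : G.IsTree) (r : ℕ) (hr : IsLastIndex G r) :
    ∀ i ≤ r, ∀ v ∈ layer G i,
      (∀ u : subSet G i v,
        (G.induce (subSet G i v)).Reachable ⟨v, Set.mem_insert v _⟩ u →
          (G.induce (subSet G i v)).dist ⟨v, Set.mem_insert v _⟩ u ≤ i) ∧
      (∃ u : subSet G i v,
        (G.induce (subSet G i v)).Reachable ⟨v, Set.mem_insert v _⟩ u ∧
          (G.induce (subSet G i v)).dist ⟨v, Set.mem_insert v _⟩ u = i) :=
  fun i _ v hv => subtree_height_general G i v hv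
end

section
/- Let G be a finite tree with odd diameter, and let V_0, …, V_r be its layers with V_r = {l_1, l_2}. Then e = {l_1, l_2} is an edge of G, and G − e has exactly two connected components, whose vertex sets are the vertex sets of T^{l_1} and T^{l_2} respectively. Consequently, if G is not symmetric about any edge, then there is no graph isomorphism f from the component of l_1 in G − e to the component of l_2 in G − e with f(l_1) = l_2; in particular, T^{l_1} and T^{l_2} are not isomorphic as rooted trees. -/
variable {V : Type*} [Fintype V] [DecidableEq V]

/-- `a` and `b` both belong to `S` and are connected inside the subgraph of
`G` induced on `S`. -/
def reachIn (G : SimpleGraph V) (S : Set V) (a b : V) : Prop :=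
  ∃ (ha : a ∈ S) (hb : b ∈ S), (G.induce S).Reachable ⟨a, ha⟩ ⟨b, hb⟩

/-- The vertex set of the subtree `T^v` rooted at `v ∈ V_i`. -/
def subtreeVerts (G : SimpleGraph V) [DecidableRel G.Adj] (i : ℕ) (v : V) :
    Set V :=
  {u | reachIn G (subSet G i v) v u}

/-- `G` is symmetric about the edge `{u, v}`: `G - e` has exactly two
connected components, containing `u` and `v` respectively, and there is a
graph isomorphism between them sending `u` to `v`. -/
def SymmetricAboutEdge (G : SimpleGraph V) : Prop :=
  ∃ u v : V, G.Adj u v ∧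
    ¬ (G.deleteEdges {s(u, v)}).Reachable u v ∧
    (∀ w : V, (G.deleteEdges {s(u, v)}).Reachable w u ∨
      (G.deleteEdges {s(u, v)}).Reachable w v) ∧
    ∃ φ : G.induce {w | (G.deleteEdges {s(u, v)}).Reachable w u} ≃g
          G.induce {w | (G.deleteEdges {s(u, v)}).Reachable w v},
      (φ ⟨u, SimpleGraph.Reachable.refl u⟩ : V) = v

/-!
Each graph `G_i` of the peeling process is connected, since deleting leaves from a connected graph
keeps it connected. It is also acyclic, and a nonempty finite acyclic graph has a leaf, so peeling
stops only when nothing is left, and hence `G_r` consists of the last layer `V_r` alone. If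
`V_r = {l₁, l₂}`, connectedness of `G_r` makes `e = {l₁, l₂}` an edge of `G`, and a bridge because
`G` is acyclic. All other vertices lie in lower layers, so `T^{l₁}` is the component of `l₁` in
`G - l₂`; that is also its component in `G - e`, because deleting the bridge `e` cuts `l₁` off
from `l₂`.
-/

section Graph

variable {α : Type*} {G : SimpleGraph α} {a b w : α} {s t : Set α}

open SimpleGraph

theorem exists_neighborSet_subsingleton_of_isAcyclic [Finite α] [Nonempty α]
    (hG : G.IsAcyclic) : ∃ v, (G.neighborSet v).Subsingleton := by
  obtain ⟨_, v, p, hp, hlongest⟩ := Walk.exists_isPath_forall_isPath_length_le_length G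
  have hneighbor : ∀ x, G.Adj v x → x = p.penultimate := fun x hx ↦ by
    refine hG.eq_penultimate_of_adj_end hp hx ?_
    by_contra hxp
    have hle := hlongest _ _ (p.concat hx) (hp.concat hxp hx)
    rw [Walk.length_concat] at hle
    exact Nat.not_succ_le_self _ hle
  exact ⟨v, fun x hx y hy ↦ (hneighbor x hx).trans (hneighbor y hy).symm⟩

theorem preconnected_induce_of_neighborSet_subsingleton (hts : t ⊆ s)
    (hs : (G.induce s).Preconnected)
    (hleaf : ∀ v : s, (v : α) ∉ t → ((G.induce s).neighborSet v).Subsingleton) :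
    (G.induce t).Preconnected := by
  have hpre : ((G.induce s).induce {v : s | (v : α) ∈ t}).Preconnected :=
    hs.induce_of_degree_eq_one hleaf
  let toInduce : (G.induce s).induce {v : s | (v : α) ∈ t} →g G.induce t :=
    ⟨fun v ↦ ⟨v, v.2⟩, fun h ↦ h⟩
  exact hpre.map toInduce fun v ↦ ⟨⟨⟨v, hts v.2⟩, v.2⟩, rfl⟩

theorem adj_of_preconnected_induce_pair (h : (G.induce {a, b}).Preconnected) (hab : a ≠ b) :
    G.Adj a b := by
  have : Nontrivial ({a, b} : Set α) := (Set.nontrivial_pair hab).coe_sort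
  obtain ⟨⟨c, rfl | rfl⟩, hc⟩ := h.exists_adj_of_nontrivial ⟨a, Set.mem_insert a {b}⟩
  · exact absurd hc (G.loopless.irrefl _)
  · exact hc

theorem reachable_deleteEdges_or_of_reachable (h : G.Reachable w a) :
    (G.deleteEdges {s(a, b)}).Reachable w a ∨ (G.deleteEdges {s(a, b)}).Reachable w b := by
  obtain ⟨p⟩ := h
  induction p with
  | nil => exact Or.inl (Reachable.refl _)
  | @cons u v c huv _ ih =>
    by_cases he : s(u, v) = s(c, b)
    · rcases Sym2.eq_iff.mp he with ⟨rfl, _⟩ | ⟨rfl, _⟩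
      · exact Or.inl (Reachable.refl _)
      · exact Or.inr (Reachable.refl _)
    · have huv' : (G.deleteEdges {s(c, b)}).Adj u v := deleteEdges_adj.mpr ⟨huv, he⟩
      exact ih.imp huv'.reachable.trans huv'.reachable.trans

theorem reachIn_compl_of_reachable_deleteEdges (hab : G.IsBridge s(a, b))
    (h : (G.deleteEdges {s(a, b)}).Reachable a w) : reachIn G {b}ᶜ a w := by
  classical
  obtain ⟨p⟩ := h
  have havoid : ∀ x ∈ p.support, x ∈ ({b}ᶜ : Set α) := by
    rintro x hx rfl
    exact hab ⟨p.takeUntil x hx⟩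
  refine ⟨havoid a p.start_mem_support, havoid w p.end_mem_support, ?_⟩
  exact (p.induce {b}ᶜ havoid).reachable.mono (comap_monotone _ (deleteEdges_le _))

theorem reachable_deleteEdges_of_reachIn_compl (h : reachIn G {b}ᶜ a w) :
    (G.deleteEdges {s(a, b)}).Reachable a w := by
  obtain ⟨_, _, hreach⟩ := h
  let toDeleteEdges : G.induce {b}ᶜ →g G.deleteEdges {s(a, b)} :=
    ⟨Subtype.val, fun {x y} hxy ↦ deleteEdges_adj.mpr ⟨hxy, fun he ↦ by
      rcases Sym2.eq_iff.mp he with ⟨_, hy⟩ | ⟨hx, _⟩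
      exacts [y.2 hy, x.2 hx]⟩⟩
  exact hreach.map toDeleteEdges

theorem reachable_deleteEdges_iff_reachIn_compl (hab : G.IsBridge s(a, b)) :
    (G.deleteEdges {s(a, b)}).Reachable a w ↔ reachIn G {b}ᶜ a w :=
  ⟨reachIn_compl_of_reachable_deleteEdges hab, reachable_deleteEdges_of_reachIn_compl⟩

theorem exists_iso_induce_congr {s' t' : Set α} (hs : s = s') (ht : t = t') (ha : a ∈ s) :
    (∃ φ : G.induce s ≃g G.induce t, (φ ⟨a, ha⟩ : α) = b) ↔
      ∃ φ : G.induce s' ≃g G.induce t', (φ ⟨a, hs ▸ ha⟩ : α) = b := by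
  subst hs ht
  rfl

end Graph

section Peeling

variable {α : Type*} [Fintype α] {G : SimpleGraph α} [DecidableRel G.Adj] {i r : ℕ} {a b v : α}

variable (G) in
/-- The graph `G_i` of the leaf-peeling process, on the vertices that survive `i` rounds. -/
abbrev peeledGraph (i : ℕ) : SimpleGraph (remaining G i : Set α) :=
  G.induce (remaining G i)

theorem mem_layer_iff_neighborSet_subsingleton (hv : v ∈ remaining G i) :
    v ∈ layer G i ↔ ((peeledGraph G i).neighborSet ⟨v, hv⟩).Subsingleton := by
  rw [layer, Finset.mem_filter, and_iff_right hv, Finset.card_le_one]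
  constructor
  · intro h x hx y hy
    exact Subtype.ext (h x (Finset.mem_filter.mpr ⟨x.2, hx⟩) y (Finset.mem_filter.mpr ⟨y.2, hy⟩))
  · intro h x hx y hy
    rw [Finset.mem_filter] at hx hy
    exact congrArg Subtype.val (@h ⟨x, hx.1⟩ hx.2 ⟨y, hy.1⟩ hy.2)

theorem layer_subset_remaining : layer G i ⊆ remaining G i :=
  Finset.filter_subset _ _

theorem remaining_succ_subset : remaining G (i + 1) ⊆ remaining G i :=
  Finset.filter_subset _ _

theorem mem_remaining_succ_iff :
    v ∈ remaining G (i + 1) ↔ v ∈ remaining G i ∧ v ∉ layer G i := by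
  simp only [remaining, layer, Finset.mem_filter, not_and, not_le, and_congr_right_iff]
  exact fun hv ↦ ⟨fun h _ ↦ h, fun h ↦ h hv⟩

theorem notMem_remaining_iff : v ∉ remaining G i ↔ ∃ j, j < i ∧ v ∈ layer G j := by
  induction i with
  | zero => simp [remaining]
  | succ i ih =>
    simp only [mem_remaining_succ_iff, not_and_or, not_not, ih, Nat.lt_succ_iff_lt_or_eq,
      or_and_right, exists_or, exists_eq_left]

theorem preconnected_peeledGraph (hG : G.Preconnected) : (peeledGraph G i).Preconnected := by
  induction i with
  | zero =>
    let toPeeled : G →g peeledGraph G 0 := ⟨fun v ↦ ⟨v, Finset.mem_univ v⟩, fun h ↦ h⟩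
    exact hG.map toPeeled fun v ↦ ⟨v, rfl⟩
  | succ i ih =>
    refine preconnected_induce_of_neighborSet_subsingleton remaining_succ_subset ih fun v hv ↦ ?_
    rw [← mem_layer_iff_neighborSet_subsingleton v.2]
    by_contra hlayer
    exact hv (mem_remaining_succ_iff.mpr ⟨v.2, hlayer⟩)

theorem layer_nonempty (hG : G.IsAcyclic) (h : (remaining G i).Nonempty) :
    (layer G i).Nonempty := by
  have : Nonempty (remaining G i : Set α) := h.to_subtype
  obtain ⟨⟨v, hv⟩, hleaf⟩ := exists_neighborSet_subsingleton_of_isAcyclic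
    (hG.induce (remaining G i : Set α))
  exact ⟨v, (mem_layer_iff_neighborSet_subsingleton hv).mpr hleaf⟩

theorem remaining_eq_layer_of_isLastIndex (hG : G.IsAcyclic) (hr : IsLastIndex G r) :
    remaining G r = layer G r := by
  have hnone : remaining G (r + 1) = ∅ := by
    by_contra h
    exact (layer_nonempty hG (Finset.nonempty_iff_ne_empty.mpr h)).ne_empty
      (hr.2 _ r.lt_succ_self)
  refine Finset.Subset.antisymm (fun v hv ↦ ?_) layer_subset_remaining
  by_contra hlayer
  exact Finset.notMem_empty v (hnone ▸ mem_remaining_succ_iff.mpr ⟨hv, hlayer⟩)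

theorem subSet_eq_insert_compl_remaining :
    subSet G i v = insert v ((remaining G i : Set α)ᶜ) := by
  ext u
  simp only [subSet, ← notMem_remaining_iff, Set.mem_insert_iff, Set.mem_ofPred_eq,
    Set.mem_compl_iff, Finset.mem_coe]

theorem setOf_reachable_deleteEdges_eq_subtreeVerts (hbridge : G.IsBridge s(a, b))
    (hrem : (remaining G i : Set α) = {a, b}) :
    {w | (G.deleteEdges {s(a, b)}).Reachable w a} = subtreeVerts G i a := by
  have hab : a ≠ b := by
    rintro rfl
    exact hbridge (SimpleGraph.Reachable.refl _)
  have hsub : subSet G i a = {b}ᶜ := by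
    rw [subSet_eq_insert_compl_remaining, hrem]
    grind
  ext w
  rw [subtreeVerts, hsub]
  exact SimpleGraph.reachable_comm.trans (reachable_deleteEdges_iff_reachIn_compl hbridge)

end Peeling

/-- In a finite tree of odd diameter with last layer
`V_r = {l₁, l₂}`: `e = {l₁, l₂}` is an edge of `G`; `G - e` has exactly two
connected components, whose vertex sets are those of `T^{l₁}` and `T^{l₂}`;
and if `G` is not symmetric about any edge, then there is no isomorphism
from the component of `l₁` to that of `l₂` mapping `l₁` to `l₂`; in
particular `T^{l₁}` and `T^{l₂}` are not isomorphic as rooted trees. -/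
theorem odd_diameter_asymmetric (G : SimpleGraph V) [DecidableRel G.Adj]
    [Nonempty V] (hG : G.IsTree) (hodd : Odd (diam G))
    (r : ℕ) (hr : IsLastIndex G r)
    (l₁ l₂ : V) (hne : l₁ ≠ l₂) (hlayer : layer G r = {l₁, l₂}) :
    G.Adj l₁ l₂ ∧
    ¬ (G.deleteEdges {s(l₁, l₂)}).Reachable l₁ l₂ ∧
    (∀ w : V, (G.deleteEdges {s(l₁, l₂)}).Reachable w l₁ ∨
      (G.deleteEdges {s(l₁, l₂)}).Reachable w l₂) ∧
    {w | (G.deleteEdges {s(l₁, l₂)}).Reachable w l₁} = subtreeVerts G r l₁ ∧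
    {w | (G.deleteEdges {s(l₁, l₂)}).Reachable w l₂} = subtreeVerts G r l₂ ∧
    (¬ SymmetricAboutEdge G →
      (¬ ∃ φ : G.induce {w | (G.deleteEdges {s(l₁, l₂)}).Reachable w l₁} ≃g
              G.induce {w | (G.deleteEdges {s(l₁, l₂)}).Reachable w l₂},
        (φ ⟨l₁, SimpleGraph.Reachable.refl l₁⟩ : V) = l₂) ∧
      (¬ ∃ ψ : G.induce (subtreeVerts G r l₁) ≃g
              G.induce (subtreeVerts G r l₂),
        (ψ ⟨l₁, ⟨Set.mem_insert _ _, Set.mem_insert _ _,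
          SimpleGraph.Reachable.refl _⟩⟩ : V) = l₂)) := by
  have hrem : (remaining G r : Set V) = {l₁, l₂} := by
    rw [remaining_eq_layer_of_isLastIndex hG.isAcyclic hr, hlayer, Finset.coe_pair]
  have hadj : G.Adj l₁ l₂ := by
    have hconn : (peeledGraph G r).Preconnected := preconnected_peeledGraph hG.preconnected
    rw [peeledGraph, hrem] at hconn
    exact adj_of_preconnected_induce_pair hconn hne
  have hbridge : G.IsBridge s(l₁, l₂) :=
    SimpleGraph.isAcyclic_iff_forall_adj_isBridge.mp hG.isAcyclic hadj
  have hcover (w : V) := reachable_deleteEdges_or_of_reachable (b := l₂) (hG.preconnected w l₁)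
  have hcomp₁ := setOf_reachable_deleteEdges_eq_subtreeVerts hbridge hrem
  have hcomp₂ : {w | (G.deleteEdges {s(l₁, l₂)}).Reachable w l₂} = subtreeVerts G r l₂ := by
    rw [Set.pair_comm] at hrem
    rw [Sym2.eq_swap] at hbridge ⊢
    exact setOf_reachable_deleteEdges_eq_subtreeVerts hbridge hrem
  refine ⟨hadj, hbridge, hcover, hcomp₁, hcomp₂, fun hasymm ↦ ?_⟩
  have hno_iso := fun h ↦ hasymm ⟨l₁, l₂, hadj, hbridge, hcover, h⟩
  exact ⟨hno_iso, (exists_iso_induce_congr hcomp₁ hcomp₂ _).not.mp hno_iso⟩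
end

section
/- Let f, g : ℕ → ℝ be nondecreasing functions taking values in [0, 1] such that f(c) + g(c) ≤ 1 for every c ∈ ℕ. Let Q : ℕ × ℕ → ℝ be a nonnegative weight function with Σ_{(a,b) ∈ ℕ × ℕ} Q(a, b) ≤ 1. Then Σ_{(a,b) ∈ ℕ × ℕ} Q(a, b) · ( f(a)·g(b) + g(a)·f(b) ) ≤ 1/2. -/
/-!
By monotonicity, both `f a * g b` and `g a * f b` are at most `f c * g c` for any common upper
bound `c` of `a` and `b`, and `f c * g c ≤ 1 / 4` by the arithmetic–geometric mean inequality. So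
the weighted average is taken of quantities that are each at most `1 / 2`.
-/

theorem mul_le_quarter_of_add_le_one {K : Type*} [Field K] [LinearOrder K] [IsStrictOrderedRing K]
    {x y : K} (h0 : 0 ≤ x + y) (h1 : x + y ≤ 1) : x * y ≤ 1 / 4 := by
  have amgm : 4 * x * y ≤ (x + y) ^ 2 := four_mul_le_sq_add x y
  have sq_le_one : (x + y) ^ 2 ≤ 1 := pow_le_one₀ h0 h1
  linarith

section DirectedOrder

variable {ι : Type*} [Preorder ι]

theorem mul_add_mul_le_two_mul_of_monotone {R : Type*} [CommSemiring R] [PartialOrder R]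
    [IsOrderedRing R] {f g : ι → R} (hf : Monotone f) (hg : Monotone g)
    (hf0 : ∀ c, 0 ≤ f c) (hg0 : ∀ c, 0 ≤ g c) {a b c : ι} (hac : a ≤ c) (hbc : b ≤ c) :
    f a * g b + g a * f b ≤ 2 * (f c * g c) :=
  calc f a * g b + g a * f b
      ≤ f c * g c + g c * f c :=
        add_le_add (mul_le_mul (hf hac) (hg hbc) (hg0 b) (hf0 c))
          (mul_le_mul (hg hac) (hf hbc) (hf0 b) (hg0 c))
    _ = 2 * (f c * g c) := by ring

theorem mul_add_mul_le_half_of_monotone [IsDirectedOrder ι] {K : Type*} [Field K] [LinearOrder K]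
    [IsStrictOrderedRing K] {f g : ι → K} (hf : Monotone f) (hg : Monotone g)
    (hf0 : ∀ c, 0 ≤ f c) (hg0 : ∀ c, 0 ≤ g c) (hsum : ∀ c, f c + g c ≤ 1) (a b : ι) :
    f a * g b + g a * f b ≤ 1 / 2 := by
  obtain ⟨c, hac, hbc⟩ := exists_ge_ge a b
  calc f a * g b + g a * f b
      ≤ 2 * (f c * g c) := mul_add_mul_le_two_mul_of_monotone hf hg hf0 hg0 hac hbc
    _ ≤ 2 * (1 / 4) := by
        gcongr
        exact mul_le_quarter_of_add_le_one (add_nonneg (hf0 c) (hg0 c)) (hsum c)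
    _ = 1 / 2 := by norm_num

end DirectedOrder

theorem tsum_mul_le_tsum_mul_of_le {α : Type*} {w u : α → ℝ} {C : ℝ} (hw0 : ∀ x, 0 ≤ w x)
    (hw : Summable w) (hu0 : ∀ x, 0 ≤ u x) (huC : ∀ x, u x ≤ C) :
    ∑' x, w x * u x ≤ (∑' x, w x) * C := by
  have le_mul_const (x : α) : w x * u x ≤ w x * C := mul_le_mul_of_nonneg_left (huC x) (hw0 x)
  have summable_mul : Summable fun x => w x * u x :=
    .of_nonneg_of_le (fun x => mul_nonneg (hw0 x) (hu0 x)) le_mul_const (hw.mul_right C)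
  calc ∑' x, w x * u x
      ≤ ∑' x, w x * C := summable_mul.tsum_le_tsum le_mul_const (hw.mul_right C)
    _ = (∑' x, w x) * C := tsum_mul_right

theorem weighted_leader_prob_le_half_general {ι : Type*} [Preorder ι] [IsDirectedOrder ι]
    {f g : ι → ℝ} (hf : Monotone f) (hg : Monotone g) (hf0 : ∀ c, 0 ≤ f c) (hg0 : ∀ c, 0 ≤ g c)
    (hsum : ∀ c, f c + g c ≤ 1) {Q : ι × ι → ℝ} (hQ0 : ∀ p, 0 ≤ Q p) (hQ : Summable Q) :
    ∑' p : ι × ι, Q p * (f p.1 * g p.2 + g p.1 * f p.2) ≤ (∑' p, Q p) * (1 / 2) :=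
  tsum_mul_le_tsum_mul_of_le hQ0 hQ
    (fun p => add_nonneg (mul_nonneg (hf0 p.1) (hg0 p.2)) (mul_nonneg (hg0 p.1) (hf0 p.2)))
    (fun p => mul_add_mul_le_half_of_monotone hf hg hf0 hg0 hsum p.1 p.2)

/-- Let `f, g : ℕ → ℝ` be nondecreasing `[0, 1]`-valued
functions with `f c + g c ≤ 1` for every `c`, and let `Q : ℕ × ℕ → ℝ` be a
nonnegative (summable) weight function whose total mass is at most `1`.
Then the `Q`-weighted sum of `f a * g b + g a * f b` is at most `1 / 2`. -/
theorem weighted_leader_prob_le_half (f g : ℕ → ℝ)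
    (hf : Monotone f) (hg : Monotone g)
    (hf01 : ∀ c, f c ∈ Set.Icc (0 : ℝ) 1)
    (hg01 : ∀ c, g c ∈ Set.Icc (0 : ℝ) 1)
    (hsum : ∀ c, f c + g c ≤ 1)
    (Q : ℕ × ℕ → ℝ) (hQ0 : ∀ p, 0 ≤ Q p)
    (hQsummable : Summable Q) (hQ1 : ∑' p, Q p ≤ 1) :
    ∑' p : ℕ × ℕ, Q p * (f p.1 * g p.2 + g p.1 * f p.2) ≤ 1 / 2 :=
  (weighted_leader_prob_le_half_general hf hg (fun c => (hf01 c).1) (fun c => (hg01 c).1) hsum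
    hQ0 hQsummable).trans (by linarith)
end
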